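/- Let Γ be a generalised hexagon of finite order (s,t) with s > 1 and t > 1, and let S be a set of s+1 points of Γ such that no point of Γ is opposite every member of S. If S contains two distinct collinear points, then S is the point set of a line of Γ. -/

import Mathlib

/-- An incidence structure of points and lines, each line being a set of points. -/
structure GenHexagon where
  Point : Type
  Line : Type
  pts : Line → Set Point

namespace GenHexagon

variable (Γ : GenHexagon)

/-- Adjacency of the bipartite incidence graph on the disjoint union of points and lines:
a point is adjacent to a line iff the point lies on the line. -/
def incAdj : Γ.Point ⊕ Γ.Line → Γ.Point ⊕ Γ.Line → Prop
  | Sum.inl x, Sum.inr L => x ∈ Γ.pts L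
  | Sum.inr L, Sum.inl x => x ∈ Γ.pts L
  | _, _ => False

/-- The bipartite incidence graph. -/
def incGraph : SimpleGraph (Γ.Point ⊕ Γ.Line) where
  Adj := Γ.incAdj
  symm := ⟨by rintro (x | L) (y | M) h <;> simp_all [incAdj]⟩
  loopless := ⟨by rintro (x | L) h <;> simp_all [incAdj]⟩

/-- `Γ` is a generalised hexagon: its incidence graph has diameter `6` and girth `12`. -/
def IsGenHexagon : Prop :=
  Γ.incGraph.ediam = 6 ∧ Γ.incGraph.egirth = 12

/-- Two points are collinear if they are distinct and some line contains both. -/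
def Collinear (x y : Γ.Point) : Prop :=
  x ≠ y ∧ ∃ L, x ∈ Γ.pts L ∧ y ∈ Γ.pts L

/-- Two points are special if they are distinct, non-collinear, and collinear
to a common point. -/
def Special (x y : Γ.Point) : Prop :=
  x ≠ y ∧ ¬ Γ.Collinear x y ∧ ∃ z, Γ.Collinear x z ∧ Γ.Collinear y z

/-- Two points are opposite if they are distinct, non-collinear and non-special. -/
def Opposite (x y : Γ.Point) : Prop :=
  x ≠ y ∧ ¬ Γ.Collinear x y ∧ ¬ Γ.Special x y

/-- `Γ` has order `(s, t)`: every line contains exactly `s + 1` points and every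
point lies on exactly `t + 1` lines. -/
def HasOrder (s t : ℕ) : Prop :=
  (∀ L, (Γ.pts L).encard = s + 1) ∧ (∀ x, {L | x ∈ Γ.pts L}.encard = t + 1)

/-- `Γ` is thick: every line contains at least `3` points and every point lies on
at least `3` lines. -/
def Thick : Prop :=
  (∀ L, 3 ≤ (Γ.pts L).encard) ∧ (∀ x, 3 ≤ {L | x ∈ Γ.pts L}.encard)

/-- A point is close to a line if it is collinear to exactly one point of that line. -/
def CloseTo (x : Γ.Point) (L : Γ.Line) : Prop :=
  ∃! y, y ∈ Γ.pts L ∧ Γ.Collinear x y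

/-- Two lines are opposite if they are disjoint and no point of one is collinear to
a point of the other. -/
def OppLines (L M : Γ.Line) : Prop :=
  (∀ x ∈ Γ.pts L, x ∉ Γ.pts M) ∧
  (∀ x ∈ Γ.pts L, ∀ y ∈ Γ.pts M, ¬ Γ.Collinear x y)

/-- The distance-3 trace `[L,M]₃` of two (opposite) lines: the set of points close to
both `L` and `M`. -/
def trace3 (L M : Γ.Line) : Set Γ.Point :=
  {x | Γ.CloseTo x L ∧ Γ.CloseTo x M}

/-- The distance-3 trace `[L,M]₃` is regular if `[N,M]₃ = [L,M]₃` for every line `N`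
opposite `M` such that `[N,M]₃` and `[L,M]₃` share at least two points. -/
def RegularTrace3 (L M : Γ.Line) : Prop :=
  ∀ N, Γ.OppLines N M → (Γ.trace3 N M ∩ Γ.trace3 L M).Nontrivial →
    Γ.trace3 N M = Γ.trace3 L M

/-- A hyperbolic line: a set `H` of pairwise special points, all collinear to a common
point `p`, such that for every point `q` opposite `p` to which at least two points of `H`
are special, the set of points special to `q` and collinear to `p` equals `H`. -/
def IsHyperbolicLine (H : Set Γ.Point) : Prop :=
  (∀ x ∈ H, ∀ y ∈ H, x ≠ y → Γ.Special x y) ∧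
  ∃ p, (∀ x ∈ H, Γ.Collinear x p) ∧
    ∀ q, Γ.Opposite q p → {x ∈ H | Γ.Special q x}.Nontrivial →
      {x | Γ.Special q x ∧ Γ.Collinear x p} = H

/-- A round-up triple: no point of `Γ` is opposite exactly one of `x₁, x₂, x₃`. -/
def RoundUpTriple (x₁ x₂ x₃ : Γ.Point) : Prop :=
  ∀ y : Γ.Point,
    ¬ ((Γ.Opposite y x₁ ∧ ¬ Γ.Opposite y x₂ ∧ ¬ Γ.Opposite y x₃) ∨
       (¬ Γ.Opposite y x₁ ∧ Γ.Opposite y x₂ ∧ ¬ Γ.Opposite y x₃) ∨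
       (¬ Γ.Opposite y x₁ ∧ ¬ Γ.Opposite y x₂ ∧ Γ.Opposite y x₃))

/-- A geometric line: a set `T` of points such that each point of `Γ` is either opposite
no member of `T`, or non-opposite to exactly one member of `T`. -/
def IsGeometricLine (T : Set Γ.Point) : Prop :=
  ∀ y : Γ.Point, (∀ x ∈ T, ¬ Γ.Opposite y x) ∨ (∃! x, x ∈ T ∧ ¬ Γ.Opposite y x)

end GenHexagon

/-!
Suppose that `S` is not the line `L` through the two given collinear points. As at least two points
of `S` lie on `L`, fewer than `|L| - 1` points of `S` lie off `L`, while `L` has a point outside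
`S`. Counting projections onto `L` gives such a point `z` to which at most one point of `S \ L`
projects; as there are at least three lines through `z`, one of them, `M`, misses `S`. Walk from `z`
along `M` to a point `w`, and from `w` along another line `K` to a point `y`, so that no point of
`S` projects to `w` on `M` or to `y` on `K`. This is possible because the points of `S` on `L` all
project to `z` on `M` and to `w` on `K`, so at most `1 + |S \ L|` points of either line have to be
avoided. Each step then moves away from every point of `S`, and `y` is opposite all of them.
-/

section Counting

variable {α β : Type*} {A : Set α} {B : Set β} {r : α → β → Prop}

theorem encard_le_encard_of_forall_subsingleton (hA : ∀ a ∈ A, ∃ b ∈ B, r a b)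
    (hB : ∀ b ∈ B, {a ∈ A | r a b}.Subsingleton) : A.encard ≤ B.encard := by
  obtain rfl | ⟨a₀, ha₀⟩ := A.eq_empty_or_nonempty
  · simp
  have : Nonempty β := ⟨(hA a₀ ha₀).choose⟩
  choose! f hfB hf using hA
  exact Set.encard_le_encard_of_injOn hfB fun a ha a' ha' h ↦
    hB (f a) (hfB a ha) ⟨ha, hf a ha⟩ ⟨ha', h ▸ hf a' ha'⟩

theorem exists_mem_subsingleton_of_encard_le (hBfin : B.Finite) (hAne : A.Nonempty)
    (hBA : B.encard ≤ A.encard) (hB : ∀ b ∈ B, {a ∈ A | r a b}.Subsingleton) :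
    ∃ a ∈ A, {b ∈ B | r a b}.Subsingleton := by
  by_contra! hA
  obtain ⟨a₀, ha₀⟩ := hAne
  obtain ⟨b₀, hb₀, -⟩ := (hA a₀ ha₀).nonempty
  -- Every element of `A` is still related to some element of `B` after `b₀` is removed.
  have hle : A.encard ≤ (B \ {b₀}).encard :=
    encard_le_encard_of_forall_subsingleton
      (fun a ha ↦
        have ⟨b, ⟨hb, hab⟩, hne⟩ := (hA a ha).exists_ne b₀
        ⟨b, ⟨hb, hne⟩, hab⟩)
      fun b hb ↦ hB b hb.1
  have hlt : (B \ {b₀}).encard < B.encard :=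
    hBfin.sdiff.encard_lt_encard (Set.sdiff_singleton_ssubset.2 hb₀)
  exact (hlt.trans_le (hBA.trans hle)).false

theorem encard_sdiff_add_one_lt {S L : Set α} (hS : (S \ L).Finite) (hSL : (S ∩ L).Nontrivial) :
    (S \ L).encard + 1 < S.encard := by
  rw [← Set.encard_sdiff_add_encard_inter S L]
  exact (ENat.add_lt_add_iff_left hS.encard_lt_top.ne).2
    (Set.one_lt_encard_iff_nontrivial.2 hSL)

end Counting

section Girth

variable {V : Type*} {G : SimpleGraph V} {a b c v : V}

theorem egirth_le_length_add_one (hvc : G.Adj v c) (w : G.Walk c v) (hw : s(v, c) ∉ w.edges) :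
    G.egirth ≤ (w.length + 1 : ℕ) := by
  classical
  have hcycle : (SimpleGraph.Walk.cons hvc w.bypass).IsCycle :=
    (SimpleGraph.Walk.cons_isCycle_iff _ _).2
      ⟨w.bypass_isPath, fun h ↦ hw (w.edges_bypass_subset_edges h)⟩
  refine (SimpleGraph.egirth_le_length hcycle).trans ?_
  rw [SimpleGraph.Walk.length_cons]
  exact_mod_cast Nat.succ_le_succ w.length_bypass_le_length

theorem notMem_support_of_length_le_dist (p : G.Walk a b) (hp : p.length ≤ G.dist a v)
    (hvb : v ≠ b) : v ∉ p.support := by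
  classical
  intro hv
  have hlt := SimpleGraph.Walk.length_takeUntil_lt_length hv hvb
  have hle := SimpleGraph.dist_le (p.takeUntil v hv)
  omega

theorem dist_eq_dist_add_one_of_lt_egirth (hG : G.Connected) (hvc : G.Adj v c) (hvb : G.Adj v b)
    (hbc : b ≠ c) (hlt : G.dist a c < G.dist a v)
    (hgirth : (2 * G.dist a v + 1 : ℕ) < G.egirth) : G.dist a b = G.dist a v + 1 := by
  suffices ¬ G.dist a b ≤ G.dist a v by
    have := hvb.diff_dist_adj (u := a)
    omega
  intro hle
  -- Shortest walks from `a` to `b` and to `c`, joined through `v`, contain a short cycle.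
  obtain ⟨p, hp⟩ := hG.exists_walk_length_eq_dist a c
  obtain ⟨q, hq⟩ := hG.exists_walk_length_eq_dist a b
  have hvp : v ∉ p.support := notMem_support_of_length_le_dist p (by omega) hvc.ne
  have hvq : v ∉ q.support := notMem_support_of_length_le_dist q (by omega) hvb.ne
  let w : G.Walk c v := p.reverse.append (q.concat hvb.symm)
  have hw : s(v, c) ∉ w.edges := by
    simp only [w, SimpleGraph.Walk.edges_append, SimpleGraph.Walk.edges_reverse,
      SimpleGraph.Walk.edges_concat, List.concat_eq_append, List.mem_append, List.mem_reverse,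
      List.mem_singleton, not_or]
    refine ⟨fun h ↦ hvp (p.fst_mem_support_of_mem_edges h),
      fun h ↦ hvq (q.fst_mem_support_of_mem_edges h), fun h ↦ ?_⟩
    rw [Sym2.eq_swap, Sym2.congr_left] at h
    exact hbc h.symm
  have hlen : w.length = G.dist a c + (G.dist a b + 1) := by
    simp only [w, SimpleGraph.Walk.length_append, SimpleGraph.Walk.length_reverse,
      SimpleGraph.Walk.length_concat, hp, hq]
  have hcycle : w.length + 1 ≤ 2 * G.dist a v + 1 := by omega
  exact ((egirth_le_length_add_one hvc w hw).trans (by exact_mod_cast hcycle)).not_gt hgirth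

end Girth

namespace GenHexagon

variable {Γ : GenHexagon} {q x y z w : Γ.Point} {K L M : Γ.Line} {S : Set Γ.Point}

/-- The distance between two points in the incidence graph. -/
noncomputable def pointDist (Γ : GenHexagon) (q x : Γ.Point) : ℕ :=
  Γ.incGraph.dist (Sum.inl q) (Sum.inl x)

/-- The distance from a point to a line in the incidence graph. -/
noncomputable def lineDist (Γ : GenHexagon) (q : Γ.Point) (K : Γ.Line) : ℕ :=
  Γ.incGraph.dist (Sum.inl q) (Sum.inr K)

/-- The point `x` is the projection of `q` onto the line `K`, the point of `K` nearest to `q`. This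
is encoded by comparing `x` with `K` itself, as a vertex of the incidence graph, instead of with the
other points of `K`. -/
def IsProjection (Γ : GenHexagon) (q : Γ.Point) (K : Γ.Line) (x : Γ.Point) : Prop :=
  x ∈ Γ.pts K ∧ Γ.pointDist q x < Γ.lineDist q K

/-- The two-colouring of the incidence graph that separates points from lines. -/
def incColoring (Γ : GenHexagon) : Γ.incGraph.Coloring Bool :=
  SimpleGraph.Coloring.mk Sum.isLeft (by rintro (x | K) (y | M) h <;> simp_all [incGraph, incAdj])

theorem adj_of_mem (h : x ∈ Γ.pts K) : Γ.incGraph.Adj (Sum.inl x) (Sum.inr K) := h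

theorem Collinear.symm (h : Γ.Collinear x y) : Γ.Collinear y x :=
  ⟨h.1.symm, h.2.imp fun _ hK ↦ hK.symm⟩

theorem Opposite.symm (h : Γ.Opposite x y) : Γ.Opposite y x :=
  ⟨h.1.symm, fun hyx ↦ h.2.1 hyx.symm, fun ⟨_, _, z, hyz, hxz⟩ ↦
    h.2.2 ⟨h.1, h.2.1, z, hxz, hyz⟩⟩

theorem Collinear.pointDist_le_two (h : Γ.Collinear x y) : Γ.pointDist x y ≤ 2 :=
  have ⟨_, _, hx, hy⟩ := h
  SimpleGraph.dist_le (.cons (adj_of_mem hx) (.cons (adj_of_mem hy).symm .nil))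

namespace IsGenHexagon

theorem ediam_ne_top (hΓ : Γ.IsGenHexagon) : Γ.incGraph.ediam ≠ ⊤ := by
  rw [hΓ.1]
  exact ENat.natCast_ne_top 6

theorem connected (hΓ : Γ.IsGenHexagon) : Γ.incGraph.Connected :=
  have : Nontrivial (Γ.Point ⊕ Γ.Line) :=
    SimpleGraph.nontrivial_of_ediam_ne_zero (G := Γ.incGraph) (by simp [hΓ.1])
  SimpleGraph.connected_of_ediam_ne_top hΓ.ediam_ne_top

theorem even_pointDist (hΓ : Γ.IsGenHexagon) (q x : Γ.Point) : Even (Γ.pointDist q x) := by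
  obtain ⟨p, hp⟩ := hΓ.connected.exists_walk_length_eq_dist (Sum.inl q) (Sum.inl x)
  rw [pointDist, ← hp, Γ.incColoring.even_length_iff_congr p]
  exact Iff.rfl

theorem odd_lineDist (hΓ : Γ.IsGenHexagon) (q : Γ.Point) (K : Γ.Line) : Odd (Γ.lineDist q K) := by
  obtain ⟨p, hp⟩ := hΓ.connected.exists_walk_length_eq_dist (Sum.inl q) (Sum.inr K)
  rw [lineDist, ← hp, Γ.incColoring.odd_length_iff_not_congr p]
  exact ⟨fun h ↦ absurd rfl h, fun h ↦ absurd h Bool.false_ne_true⟩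

theorem lineDist_le_five (hΓ : Γ.IsGenHexagon) (q : Γ.Point) (K : Γ.Line) :
    Γ.lineDist q K ≤ 5 := by
  have hle : Γ.lineDist q K ≤ Γ.incGraph.diam := SimpleGraph.dist_le_diam hΓ.ediam_ne_top
  have hdiam : Γ.incGraph.diam = 6 := by simp [SimpleGraph.diam, hΓ.1]
  have := hΓ.odd_lineDist q K
  grind

theorem three_le_lineDist_of_notMem (hΓ : Γ.IsGenHexagon) (h : q ∉ Γ.pts K) :
    3 ≤ Γ.lineDist q K := by
  have hne : Γ.lineDist q K ≠ 1 := fun h₁ ↦ h (SimpleGraph.dist_eq_one_iff_adj.1 h₁)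
  have := hΓ.odd_lineDist q K
  grind

theorem isProjection_or_pointDist_eq (hΓ : Γ.IsGenHexagon) (q : Γ.Point) (hx : x ∈ Γ.pts K) :
    Γ.IsProjection q K x ∨ Γ.pointDist q x = Γ.lineDist q K + 1 := by
  have hadj := (adj_of_mem hx).symm.diff_dist_adj (u := Sum.inl q)
  have heven := hΓ.even_pointDist q x
  have hodd := hΓ.odd_lineDist q K
  unfold IsProjection
  unfold pointDist lineDist at *
  grind

theorem pointDist_eq_of_not_isProjection (hΓ : Γ.IsGenHexagon) (hx : x ∈ Γ.pts K)
    (h : ¬ Γ.IsProjection q K x) : Γ.pointDist q x = Γ.lineDist q K + 1 :=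
  (hΓ.isProjection_or_pointDist_eq q hx).resolve_left h

theorem dist_eq_dist_add_one (hΓ : Γ.IsGenHexagon) {a v b c : Γ.Point ⊕ Γ.Line}
    (hvc : Γ.incGraph.Adj v c) (hvb : Γ.incGraph.Adj v b) (hbc : b ≠ c)
    (hlt : Γ.incGraph.dist a c < Γ.incGraph.dist a v) (hle : Γ.incGraph.dist a v ≤ 5) :
    Γ.incGraph.dist a b = Γ.incGraph.dist a v + 1 := by
  refine dist_eq_dist_add_one_of_lt_egirth hΓ.connected hvc hvb hbc hlt ?_
  rw [hΓ.2]
  exact_mod_cast (by omega : 2 * Γ.incGraph.dist a v + 1 < 12)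

theorem isProjection_unique (hΓ : Γ.IsGenHexagon) (hx : Γ.IsProjection q K x)
    (hy : Γ.IsProjection q K y) : x = y := by
  by_contra hxy
  have hdist : Γ.pointDist q y = Γ.lineDist q K + 1 :=
    hΓ.dist_eq_dist_add_one (adj_of_mem hx.1).symm (adj_of_mem hy.1).symm
      (Sum.inl_injective.ne (Ne.symm hxy)) hx.2 (hΓ.lineDist_le_five q K)
  have := hy.2
  omega

theorem line_eq_of_mem_of_mem (hΓ : Γ.IsGenHexagon) (hxy : x ≠ y) (hxK : x ∈ Γ.pts K)
    (hyK : y ∈ Γ.pts K) (hxM : x ∈ Γ.pts M) (hyM : y ∈ Γ.pts M) : K = M := by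
  by_contra hKM
  have hK : Γ.lineDist x K = 1 := SimpleGraph.dist_eq_one_iff_adj.2 (adj_of_mem hxK)
  have hM : Γ.lineDist x M = 1 := SimpleGraph.dist_eq_one_iff_adj.2 (adj_of_mem hxM)
  have hpos : 0 < Γ.pointDist x y := hΓ.connected.pos_dist_of_ne (Sum.inl_injective.ne hxy)
  have heven := hΓ.even_pointDist x y
  have hle := Collinear.pointDist_le_two ⟨hxy, K, hxK, hyK⟩
  have hlt : Γ.lineDist x K < Γ.pointDist x y := by grind
  have hdist : Γ.lineDist x M = Γ.pointDist x y + 1 :=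
    hΓ.dist_eq_dist_add_one (adj_of_mem hyK) (adj_of_mem hyM)
      (Sum.inr_injective.ne (Ne.symm hKM)) hlt (hle.trans (by norm_num))
  omega

theorem isProjection_of_collinear (hΓ : Γ.IsGenHexagon) (hqz : Γ.Collinear q z)
    (hz : z ∈ Γ.pts K) (hq : q ∉ Γ.pts K) : Γ.IsProjection q K z :=
  ⟨hz, hqz.pointDist_le_two.trans_lt (hΓ.three_le_lineDist_of_notMem hq)⟩

theorem pointDist_le_four (hΓ : Γ.IsGenHexagon) (hxz : Γ.Collinear x z) (hzy : Γ.Collinear z y) :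
    Γ.pointDist x y ≤ 4 :=
  hΓ.connected.dist_triangle.trans (add_le_add hxz.pointDist_le_two hzy.pointDist_le_two)

theorem opposite_of_four_lt_pointDist (hΓ : Γ.IsGenHexagon) (h : 4 < Γ.pointDist x y) :
    Γ.Opposite x y := by
  refine ⟨?_, fun hxy ↦ ?_, ?_⟩
  · rintro rfl
    simp [pointDist] at h
  · have := hxy.pointDist_le_two
    omega
  · rintro ⟨-, -, z, hxz, hyz⟩
    exact (hΓ.pointDist_le_four hxz hyz.symm).not_gt h

theorem lineDist_eq_five_of_not_isProjection (hΓ : Γ.IsGenHexagon) (hq : q ∉ Γ.pts M)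
    (hwM : w ∈ Γ.pts M) (hw : ¬ Γ.IsProjection q M w) (hwK : w ∈ Γ.pts K) (hKM : K ≠ M) :
    Γ.lineDist q K = 5 := by
  have hM : 3 ≤ Γ.lineDist q M := hΓ.three_le_lineDist_of_notMem hq
  have hdist_w := hΓ.pointDist_eq_of_not_isProjection hwM hw
  have hK := hΓ.lineDist_le_five q K
  by_cases hle : Γ.pointDist q w ≤ 5
  · have hdist : Γ.lineDist q K = Γ.pointDist q w + 1 :=
      hΓ.dist_eq_dist_add_one (adj_of_mem hwM) (adj_of_mem hwK) (Sum.inr_injective.ne hKM)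
        (Nat.lt_of_lt_of_eq (Nat.lt_succ_self _) hdist_w.symm) hle
    omega
  · obtain hproj | hdist := hΓ.isProjection_or_pointDist_eq q hwK
    · have := hproj.2
      omega
    · omega

theorem exists_line_disjoint (hΓ : Γ.IsGenHexagon) (hz : 3 ≤ {K | z ∈ Γ.pts K}.encard)
    (hzL : z ∈ Γ.pts L) (hzS : z ∉ S)
    (hproj : {q ∈ S \ Γ.pts L | Γ.IsProjection q L z}.Subsingleton) :
    ∃ M, z ∈ Γ.pts M ∧ Disjoint S (Γ.pts M) := by
  by_contra! hmeet
  have hle : ({K | z ∈ Γ.pts K} \ {L}).encard ≤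
      {q ∈ S \ Γ.pts L | Γ.IsProjection q L z}.encard := by
    refine encard_le_encard_of_forall_subsingleton (r := fun K q ↦ q ∈ Γ.pts K) ?_ ?_
    · rintro K ⟨hzK, hKL⟩
      obtain ⟨q, hqS, hqK⟩ := Set.not_disjoint_iff.1 (hmeet K hzK)
      have hqz : q ≠ z := ne_of_mem_of_not_mem hqS hzS
      have hqL : q ∉ Γ.pts L := fun hqL ↦ hKL (hΓ.line_eq_of_mem_of_mem hqz hqK hzK hqL hzL)
      exact ⟨q, ⟨⟨hqS, hqL⟩, hΓ.isProjection_of_collinear ⟨hqz, K, hqK, hzK⟩ hzL hqL⟩, hqK⟩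
    · rintro q ⟨⟨hqS, -⟩, -⟩ K ⟨⟨hzK, -⟩, hqK⟩ M ⟨⟨hzM, -⟩, hqM⟩
      exact hΓ.line_eq_of_mem_of_mem (ne_of_mem_of_not_mem hqS hzS) hqK hzK hqM hzM
  have hcard : {K | z ∈ Γ.pts K}.encard ≤ 1 + 1 := by
    rw [← Set.encard_sdiff_singleton_add_one (show L ∈ {K | z ∈ Γ.pts K} from hzL)]
    gcongr
    exact hle.trans (Set.encard_le_one_iff_subsingleton.2 hproj)
  exact absurd (hz.trans hcard) (by norm_num)

theorem exists_mem_forall_not_isProjection (hΓ : Γ.IsGenHexagon) {A : Set Γ.Point}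
    (hx : ∀ q ∈ S ∩ A, Γ.IsProjection q M x) (hcard : (S \ A).encard + 1 < (Γ.pts M).encard) :
    ∃ w ∈ Γ.pts M, ∀ q ∈ S, ¬ Γ.IsProjection q M w := by
  by_contra! hproj
  have hle : (Γ.pts M \ {x}).encard ≤ (S \ A).encard := by
    refine encard_le_encard_of_forall_subsingleton (r := fun w q ↦ Γ.IsProjection q M w) ?_ ?_
    · rintro w ⟨hwM, hwx⟩
      obtain ⟨q, hqS, hqw⟩ := hproj w hwM
      exact ⟨q, ⟨hqS, fun hqA ↦ hwx (hΓ.isProjection_unique hqw (hx q ⟨hqS, hqA⟩))⟩, hqw⟩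
    · rintro q - w ⟨-, hw⟩ w' ⟨-, hw'⟩
      exact hΓ.isProjection_unique hw hw'
  refine hcard.not_ge ?_
  calc (Γ.pts M).encard ≤ (Γ.pts M \ {x}).encard + ({x} : Set Γ.Point).encard :=
        Set.encard_le_encard_sdiff_add_encard _ _
    _ ≤ (S \ A).encard + 1 := by
        rw [Set.encard_singleton]
        gcongr

theorem exists_forall_opposite_of_disjoint (hΓ : Γ.IsGenHexagon) {A : Set Γ.Point}
    (hlines : ∀ K, (S \ A).encard + 1 < (Γ.pts K).encard)
    (hpoints : ∀ x, 1 < {K | x ∈ Γ.pts K}.encard) (hzM : z ∈ Γ.pts M) (hSM : Disjoint S (Γ.pts M))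
    (hz : ∀ q ∈ S ∩ A, Γ.Collinear q z) : ∃ y, ∀ q ∈ S, Γ.Opposite y q := by
  have hqM : ∀ q ∈ S, q ∉ Γ.pts M := fun _ ↦ (Set.disjoint_left.1 hSM ·)
  have hzproj : ∀ q ∈ S ∩ A, Γ.IsProjection q M z := fun q hq ↦
    hΓ.isProjection_of_collinear (hz q hq) hzM (hqM q hq.1)
  obtain ⟨w, hwM, hw⟩ := hΓ.exists_mem_forall_not_isProjection hzproj (hlines M)
  obtain ⟨K, hwK, hKM⟩ := (Set.one_lt_encard_iff_nontrivial.1 (hpoints w)).exists_ne M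
  have hK : ∀ q ∈ S, Γ.lineDist q K = 5 := fun q hq ↦
    hΓ.lineDist_eq_five_of_not_isProjection (hqM q hq) hwM (hw q hq) hwK hKM
  have hwproj : ∀ q ∈ S ∩ A, Γ.IsProjection q K w := fun q hq ↦ by
    have hzw : z ≠ w := fun h ↦ hw q hq.1 (h ▸ hzproj q hq)
    refine ⟨hwK, (hΓ.pointDist_le_four (hz q hq) ⟨hzw, M, hzM, hwM⟩).trans_lt ?_⟩
    simp [hK q hq.1]
  obtain ⟨y, hyK, hy⟩ := hΓ.exists_mem_forall_not_isProjection hwproj (hlines K)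
  refine ⟨y, fun q hq ↦ (hΓ.opposite_of_four_lt_pointDist ?_).symm⟩
  rw [hΓ.pointDist_eq_of_not_isProjection hyK (hy q hq), hK q hq]
  norm_num

end IsGenHexagon
end GenHexagon

theorem claim2_collinear_pair_gives_line_general (Γ : GenHexagon) (hΓ : Γ.IsGenHexagon)
    (S : Set Γ.Point) (hS : S.Finite) (hlines : ∀ K, S.encard ≤ (Γ.pts K).encard)
    (hpoints : ∀ x, 3 ≤ {K | x ∈ Γ.pts K}.encard)
    (hblock : ¬ ∃ y : Γ.Point, ∀ x ∈ S, Γ.Opposite y x)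
    (p₀ p₁ : Γ.Point) (hp₀ : p₀ ∈ S) (hp₁ : p₁ ∈ S) (hcol : Γ.Collinear p₀ p₁) :
    ∃ L, S = Γ.pts L := by
  obtain ⟨hne, L, hp₀L, hp₁L⟩ := hcol
  refine ⟨L, ?_⟩
  by_contra hSL
  have hLS : ¬ Γ.pts L ⊆ S := fun h ↦ hSL (hS.eq_of_subset_of_encard_le' h (hlines L)).symm
  have hcard : (S \ Γ.pts L).encard ≤ (Γ.pts L \ S).encard :=
    (Set.encard_le_encard_iff_encard_sdiff_le_encard_sdiff (hS.inter_of_left _)).1 (hlines L)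
  obtain ⟨z, ⟨hzL, hzS⟩, hz⟩ := exists_mem_subsingleton_of_encard_le
    (r := fun z q ↦ Γ.IsProjection q L z) hS.sdiff (Set.sdiff_nonempty.2 hLS) hcard
    fun q _ z hz z' hz' ↦ hΓ.isProjection_unique hz.2 hz'.2
  obtain ⟨M, hzM, hSM⟩ := hΓ.exists_line_disjoint (hpoints z) hzL hzS hz
  have hfew : (S \ Γ.pts L).encard + 1 < S.encard :=
    encard_sdiff_add_one_lt hS.sdiff ⟨p₀, ⟨hp₀, hp₀L⟩, p₁, ⟨hp₁, hp₁L⟩, hne⟩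
  exact hblock (hΓ.exists_forall_opposite_of_disjoint (fun K ↦ hfew.trans_le (hlines K))
    (fun x ↦ lt_of_lt_of_le (by norm_num) (hpoints x)) hzM hSM
    fun q hq ↦ ⟨ne_of_mem_of_not_mem hq.1 hzS, L, hq.2, hzL⟩)

/-- Claim 2 in the proof: if `S` contains two distinct collinear points, then `S` is
the point set of a line. -/
theorem claim2_collinear_pair_gives_line (Γ : GenHexagon) (hΓ : Γ.IsGenHexagon)
    (s t : ℕ) (hs : 1 < s) (ht : 1 < t) (hord : Γ.HasOrder s t)
    (S : Set Γ.Point) (hS : S.encard = s + 1)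
    (hblock : ¬ ∃ y : Γ.Point, ∀ x ∈ S, Γ.Opposite y x)
    (p₀ p₁ : Γ.Point) (hp₀ : p₀ ∈ S) (hp₁ : p₁ ∈ S) (hcol : Γ.Collinear p₀ p₁) :
    ∃ L, S = Γ.pts L := by
  have hthree : (3 : ℕ∞) ≤ t + 1 := by exact_mod_cast Nat.succ_le_succ ht
  exact claim2_collinear_pair_gives_line_general Γ hΓ S
    (Set.finite_of_encard_eq_coe (k := s + 1) hS)
    (fun K ↦ (hS.trans (hord.1 K).symm).le) (fun x ↦ hthree.trans_eq (hord.2 x).symm)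
    hblock p₀ p₁ hp₀ hp₁ hcol
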